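/- arXiv:2508.14736 — 2 statements merged into one kernel-verified Lean document; each statement's English description precedes it below -/
import Mathlib

section
/- There exists a constant c > 0, depending only on the dimension n, with the following property: if ψ : ℝⁿ → ℝ is Lipschitz on the closed ball B̄_R, h is a harmonic replacement of ψ in B_R, and ∫_{B_R} ‖Dh‖² dx < ∞, then c ∫_{B_R} ‖Dψ − Dh‖² dx ≤ ∫_{B_R} (‖Dψ‖² − ‖Dh‖²) dx. -/
open MeasureTheory Metric Set Filter
/-- `h` is a harmonic replacement of `ψ` in the ball `B_R(x₀)`: it is continuous on the
closed ball, `C²` on the open ball with vanishing Laplacian (the trace of the second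
derivative) there, and agrees with `ψ` on the sphere. -/
def IsHarmRep (n : ℕ) (ψ h : EuclideanSpace ℝ (Fin n) → ℝ)
    (x₀ : EuclideanSpace ℝ (Fin n)) (R : ℝ) : Prop :=
  ContinuousOn h (closedBall x₀ R) ∧
  ContDiffOn ℝ 2 h (ball x₀ R) ∧
  (∀ x ∈ ball x₀ R,
    ∑ i : Fin n, fderiv ℝ (fderiv ℝ h) x (EuclideanSpace.single i 1)
      (EuclideanSpace.single i 1) = 0) ∧
  ∀ x ∈ sphere x₀ R, h x = ψ x

open scoped Topology NNReal

lemma aux_level {E : Type*} [NormedAddCommGroup E] [NormedSpace ℝ E] {w : E → ℝ} {x : E} {c : ℝ}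
    (h2 : DifferentiableAt ℝ (fun y => |w y - c|) x) (hx : w x = c) : HasFDerivAt w (0 : E →L[ℝ] ℝ) x := by
  have hmin : IsLocalMin (fun y => |w y - c|) x := by
    refine Filter.Eventually.of_forall fun y => ?_
    simp [hx]
  have h0 := hmin.fderiv_eq_zero
  have h3 := h2.hasFDerivAt
  rw [h0] at h3
  rw [hasFDerivAt_iff_isLittleO] at h3 ⊢
  simp only [hx, sub_self, abs_zero, sub_zero, _root_.zero_apply] at h3 ⊢
  exact h3.norm_left.congr_left (fun y => by simp) |>.of_norm_left

lemma aux_ae_diff {n : ℕ} {w : EuclideanSpace ℝ (Fin n) → ℝ} {R : ℝ}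
    (hL : ∀ r < R, ∃ K, LipschitzOnWith K w (closedBall 0 r)) :
    ∀ᵐ x, x ∈ ball (0 : EuclideanSpace ℝ (Fin n)) R → DifferentiableAt ℝ w x := by
  have : ∀ k : ℕ, ∀ᵐ x, x ∈ ball (0 : EuclideanSpace ℝ (Fin n)) (R - 1 / ((k:ℝ) + 1)) →
      DifferentiableAt ℝ w x := by
    intro k
    obtain ⟨K, hK⟩ := hL (R - 1 / ((k:ℝ) + 1)) (by have : 0 < 1 / ((k:ℝ) + 1) := by positivity
                                                   linarith)
    filter_upwards [(hK.mono ball_subset_closedBall).ae_differentiableWithinAt_of_mem (μ := volume)] with x hx hxb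
    exact (hx hxb).differentiableAt (isOpen_ball.mem_nhds hxb)
  filter_upwards [ae_all_iff.2 this] with x hx hxR
  rw [mem_ball_zero_iff] at hxR
  obtain ⟨k, hk⟩ := exists_nat_one_div_lt (sub_pos.2 hxR)
  exact hx k (by rw [mem_ball_zero_iff]; linarith)

lemma aux_ae_level {n : ℕ} {w : EuclideanSpace ℝ (Fin n) → ℝ} {R : ℝ}
    (hL : ∀ r < R, ∃ K, LipschitzOnWith K w (closedBall 0 r)) (c : ℝ) :
    ∀ᵐ x, x ∈ ball (0 : EuclideanSpace ℝ (Fin n)) R → w x = c →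
      HasFDerivAt w (0 : EuclideanSpace ℝ (Fin n) →L[ℝ] ℝ) x := by
  have : ∀ r < R, ∃ K, LipschitzOnWith K (fun y => |w y - c|) (closedBall 0 r) := by
    intro r hr
    obtain ⟨K, hK⟩ := hL r hr
    refine ⟨K, LipschitzOnWith.of_dist_le_mul fun x hx y hy => ?_⟩
    refine le_trans ?_ (hK.dist_le_mul x hx y hy)
    rw [Real.dist_eq, Real.dist_eq]
    refine (abs_abs_sub_abs_le _ _).trans (le_of_eq (by congr 1; ring))
  filter_upwards [aux_ae_diff this] with x hx hxR hc
  exact aux_level (hx hxR) hc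

lemma aux_lip {n : ℕ} {h : EuclideanSpace ℝ (Fin n) → ℝ} {R : ℝ}
    (hc : ContDiffOn ℝ 2 h (ball 0 R)) (r : ℝ) (hr : r < R) :
    ∃ K, LipschitzOnWith K h (closedBall 0 r) := by
  have hsub : closedBall (0 : EuclideanSpace ℝ (Fin n)) r ⊆ ball 0 R := closedBall_subset_ball hr
  have hcont : ContinuousOn (fderiv ℝ h) (closedBall 0 r) :=
    (hc.continuousOn_fderiv_of_isOpen isOpen_ball (by norm_num)).mono hsub
  obtain ⟨C, hC⟩ := (isCompact_closedBall _ _).exists_bound_of_continuousOn hcont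
  refine ⟨C.toNNReal, (convex_closedBall _ _).lipschitzOnWith_of_nnnorm_fderiv_le (𝕜 := ℝ)
    (fun x hx => ?_) (fun x hx => ?_)⟩
  · exact (hc.differentiableOn (by norm_num)).differentiableAt (isOpen_ball.mem_nhds (hsub hx))
  · rw [← NNReal.coe_le_coe, coe_nnnorm]
    exact (hC x hx).trans (Real.le_coe_toNNReal C)

lemma aux_ibp {n : ℕ} {h f : EuclideanSpace ℝ (Fin n) → ℝ} {R : ℝ}
    (hc : ContDiffOn ℝ 2 h (ball 0 R))
    (hlap : ∀ x ∈ ball (0 : EuclideanSpace ℝ (Fin n)) R,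
      ∑ i : Fin n, fderiv ℝ (fderiv ℝ h) x (EuclideanSpace.single i 1)
      (EuclideanSpace.single i 1) = 0)
    {K : ℝ≥0} (hf : LipschitzWith K f)
    (χ : ContDiffBump (0 : EuclideanSpace ℝ (Fin n))) (hR : χ.rOut < R)
    (hf0 : ∀ x, χ.rIn ≤ ‖x‖ → ‖x‖ ≤ χ.rOut → f x = 0) :
    ∫ x, ∑ i : Fin n, lineDeriv ℝ f x (EuclideanSpace.single i 1) *
      (χ x * fderiv ℝ h x (EuclideanSpace.single i 1)) = 0 := by
  set e : Fin n → EuclideanSpace ℝ (Fin n) := fun i => EuclideanSpace.single i 1 with he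
  let g : Fin n → EuclideanSpace ℝ (Fin n) → ℝ := fun i x => χ x * fderiv ℝ h x (e i)
  have hout : ∀ i x, χ.rOut < ‖x‖ → g i =ᶠ[𝓝 x] fun _ => 0 := by
    intro i x hx
    have : {y : EuclideanSpace ℝ (Fin n) | χ.rOut < ‖y‖} ∈ 𝓝 x :=
      (isOpen_lt continuous_const continuous_norm).mem_nhds hx
    filter_upwards [this] with y hy
    have : χ y = 0 := χ.zero_of_le_dist (by simpa using le_of_lt hy)
    simp [g, this]
  have hD : ContDiffOn ℝ 1 (fderiv ℝ h) (ball 0 R) :=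
    hc.fderiv_of_isOpen isOpen_ball (by norm_num)
  have hg1 : ∀ i, ContDiff ℝ 1 (g i) := by
    intro i
    rw [contDiff_iff_contDiffAt]
    intro x
    by_cases hx : ‖x‖ < R
    · have h1 : ContDiffAt ℝ 1 (fderiv ℝ h) x :=
        hD.contDiffAt (isOpen_ball.mem_nhds (by simpa using hx))
      exact χ.contDiffAt.mul (h1.clm_apply contDiffAt_const)
    · exact contDiffAt_const.congr_of_eventuallyEq (hout i x (by linarith))
  have hgs : ∀ i, HasCompactSupport (g i) := fun i => χ.hasCompactSupport.mul_right
  have hint1 : ∀ i, Integrable (fun x => lineDeriv ℝ f x (e i) * g i x) := by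
    intro i
    have h1 : Integrable (g i) := (hg1 i).continuous.integrable_of_hasCompactSupport (hgs i)
    refine h1.bdd_mul (c := K * ‖e i‖) (hf.memLp_lineDeriv (μ := volume) (e i)).1 ?_
    exact Filter.Eventually.of_forall fun x => norm_lineDeriv_le_of_lipschitz ℝ hf
  have hld : ∀ i x, lineDeriv ℝ (g i) x (-(e i)) = - fderiv ℝ (g i) x (e i) := by
    intro i x
    rw [((hg1 i).differentiable (by norm_num) x).lineDeriv_eq_fderiv, map_neg]
  have hint2 : ∀ i, Integrable (fun x => lineDeriv ℝ (g i) x (-(e i)) * f x) := by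
    intro i
    simp_rw [hld]
    simp_rw [neg_mul]
    refine (Continuous.integrable_of_hasCompactSupport ?_ ?_).neg
    · exact (((hg1 i).continuous_fderiv (by norm_num)).clm_apply continuous_const).mul
        hf.continuous
    · exact ((hgs i).fderiv_apply ℝ (e i)).mul_right
  rw [integral_finsetSum _ (fun i _ => hint1 i)]
  have : ∀ i, ∫ x, lineDeriv ℝ f x (e i) * g i x = ∫ x, lineDeriv ℝ (g i) x (-(e i)) * f x := by
    intro i
    obtain ⟨D, hgL⟩ := ContDiff.lipschitzWith_of_hasCompactSupport (hgs i) (hg1 i) (by norm_num)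
    exact hf.integral_lineDeriv_mul_eq hgL (hgs i) (e i)
  rw [Finset.sum_congr rfl (fun i _ => this i), ← integral_finsetSum _ (fun i _ => hint2 i)]
  rw [← integral_zero]
  congr 1
  ext x
  rcases lt_or_ge ‖x‖ χ.rIn with hx | hx
  · have hxR : x ∈ ball (0 : EuclideanSpace ℝ (Fin n)) R := by
      rw [mem_ball_zero_iff]; linarith [χ.rIn_lt_rOut]
    have : ∀ i, fderiv ℝ (g i) x (e i) = fderiv ℝ (fderiv ℝ h) x (e i) (e i) := by
      intro i
      have h1 : g i =ᶠ[𝓝 x] fun y => fderiv ℝ h y (e i) := by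
        filter_upwards [χ.eventuallyEq_one_of_mem_ball (by simpa using hx)] with y hy
        simp [g, hy]
      rw [h1.fderiv_eq]
      have h2 : DifferentiableAt ℝ (fderiv ℝ h) x :=
        (hD.differentiableOn (by norm_num)).differentiableAt (isOpen_ball.mem_nhds hxR)
      rw [fderiv_clm_apply h2 (differentiableAt_const _)]
      simp
    simp_rw [hld, this]
    rw [← Finset.sum_mul, Finset.sum_neg_distrib, hlap x hxR]
    simp
  · rcases le_or_gt ‖x‖ χ.rOut with hx2 | hx2
    · simp [hf0 x hx hx2]
    · refine Finset.sum_eq_zero fun i _ => ?_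
      rw [hld, (hout i x hx2).fderiv_eq]
      simp

lemma aux_thresh {n : ℕ} {w : EuclideanSpace ℝ (Fin n) → ℝ} {R : ℝ} (hR : 0 < R)
    (hw : ContinuousOn w (closedBall 0 R)) (h0 : ∀ x ∈ sphere (0 : EuclideanSpace ℝ (Fin n)) R, w x = 0)
    {ε : ℝ} (hε : 0 < ε) :
    ∃ r, 0 < r ∧ r < R ∧ ∀ x, r ≤ ‖x‖ → ‖x‖ ≤ R → |w x| ≤ ε := by
  let A : Set (EuclideanSpace ℝ (Fin n)) := closedBall 0 R ∩ (fun x => |w x|) ⁻¹' Ici ε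
  have hA : IsCompact A := (isCompact_closedBall _ _).of_isClosed_subset
    (hw.abs.preimage_isClosed_of_isClosed isClosed_closedBall isClosed_Ici) inter_subset_left
  rcases A.eq_empty_or_nonempty with hemp | hne
  · refine ⟨R / 2, by linarith, by linarith, fun x _ hx => ?_⟩
    by_contra hcon
    have : x ∈ A := ⟨by simpa using hx, le_of_lt (not_le.1 hcon)⟩
    simp [hemp] at this
  · obtain ⟨x0, hx0, hmax⟩ := hA.exists_isMaxOn hne continuous_norm.continuousOn
    have hlt : ‖x0‖ < R := by
      refine lt_of_le_of_ne (by simpa using hx0.1) fun heq => ?_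
      have h1 := h0 x0 (by simpa using heq)
      have h2 : ε ≤ |w x0| := hx0.2
      rw [h1, abs_zero] at h2
      linarith
    refine ⟨(‖x0‖ + R) / 2, by linarith [norm_nonneg x0], by linarith, fun x h1 h2 => ?_⟩
    by_contra hcon
    have hxA : x ∈ A := ⟨by simpa using h2, le_of_lt (not_le.1 hcon)⟩
    have : ‖x‖ ≤ ‖x0‖ := hmax hxA
    linarith

lemma aux_soft (ε a b : ℝ) (hε : 0 < ε) :
    |(a - max (-ε) (min ε a)) - (b - max (-ε) (min ε b))| ≤ |a - b| := by
  rw [abs_le]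
  rcases max_cases (-ε) (min ε a) with h1 | h1 <;> rcases max_cases (-ε) (min ε b) with h2 | h2 <;>
  rcases min_cases ε a with h3 | h3 <;> rcases min_cases ε b with h4 | h4 <;>
  rcases abs_cases (a - b) with h5 | h5 <;>
  constructor <;> linarith

lemma aux_soft_zero {ε a : ℝ} (h : |a| ≤ ε) : a - max (-ε) (min ε a) = 0 := by
  rw [abs_le] at h
  rw [min_eq_right h.2, max_eq_right h.1, sub_self]

lemma aux_main {n : ℕ} {w h : EuclideanSpace ℝ (Fin n) → ℝ} {R : ℝ} (hR : 0 < R)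
    (hc : ContDiffOn ℝ 2 h (ball 0 R))
    (hlap : ∀ x ∈ ball (0 : EuclideanSpace ℝ (Fin n)) R,
      ∑ i : Fin n, fderiv ℝ (fderiv ℝ h) x (EuclideanSpace.single i 1)
      (EuclideanSpace.single i 1) = 0)
    (hw : ContinuousOn w (closedBall 0 R)) (h0 : ∀ x ∈ sphere (0 : EuclideanSpace ℝ (Fin n)) R, w x = 0)
    (hL : ∀ r < R, ∃ K, LipschitzOnWith K w (closedBall 0 r))
    {ε : ℝ} (hε : 0 < ε) :
    ∫ x in ball (0 : EuclideanSpace ℝ (Fin n)) R, {x | ε < |w x|}.indicator (fun x => ∑ i : Fin n,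
      fderiv ℝ w x (EuclideanSpace.single i 1) * fderiv ℝ h x (EuclideanSpace.single i 1)) x = 0 := by
  obtain ⟨r, hr0, hrR, hr⟩ := aux_thresh hR hw h0 hε
  let χ : ContDiffBump (0 : EuclideanSpace ℝ (Fin n)) := ⟨r, (r + R) / 2, hr0, by linarith⟩
  have hrIn : χ.rIn = r := rfl
  have hrOut : χ.rOut = (r + R) / 2 := rfl
  have hOR : χ.rOut < R := by rw [hrOut]; linarith
  obtain ⟨K, hK⟩ := hL χ.rOut hOR
  obtain ⟨w', hw', heq⟩ := hK.extend_real
  let f : EuclideanSpace ℝ (Fin n) → ℝ := fun x => w' x - max (-ε) (min ε (w' x))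
  have hf : LipschitzWith K f := LipschitzWith.of_dist_le_mul fun x y =>
    (aux_soft ε (w' x) (w' y) hε).trans (hw'.dist_le_mul x y)
  have hfw : ∀ x, ‖x‖ ≤ χ.rOut → f x = w x - max (-ε) (min ε (w x)) := by
    intro x hx
    have := heq (show x ∈ closedBall 0 χ.rOut by simpa using hx)
    simp only [f, this]
  have key := aux_ibp hc hlap hf χ hOR (fun x h1 h2 => by
    rw [hfw x h2]
    exact aux_soft_zero (hr x h1 (by linarith)))
  rw [← key, ← integral_indicator measurableSet_ball]
  refine integral_congr_ae ?_
  filter_upwards [aux_ae_diff hL, aux_ae_level hL ε, aux_ae_level hL (-ε)] with x hd hl1 hl2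
  rcases le_or_gt χ.rOut ‖x‖ with hx | hx
  · have hχ : χ x = 0 := χ.zero_of_le_dist (by simpa using hx)
    simp only [hχ, zero_mul, mul_zero, Finset.sum_const_zero]
    by_cases hxR : x ∈ ball (0 : EuclideanSpace ℝ (Fin n)) R
    · rw [indicator_of_mem hxR, indicator_of_notMem]
      simp only [mem_ofPred_eq, not_lt]
      rw [mem_ball_zero_iff] at hxR
      exact hr x (by linarith) hxR.le
    · rw [indicator_of_notMem hxR]
  · have hxR : x ∈ ball (0 : EuclideanSpace ℝ (Fin n)) R := by rw [mem_ball_zero_iff]; linarith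
    rw [indicator_of_mem hxR]
    have hev : ∀ᶠ y in 𝓝 x, ‖y‖ < χ.rOut := continuous_norm.continuousAt.eventually_lt_const hx
    have hdx := hd hxR
    have hcx := hdx.continuousAt
    rcases lt_or_ge ε |w x| with hwx | hwx
    · have hxr : ‖x‖ < r := by
        by_contra hcon
        rw [mem_ball_zero_iff] at hxR
        linarith [hr x (not_lt.1 hcon) hxR.le]
      have hχ : χ x = 1 := χ.one_of_mem_closedBall (by simpa [hrIn] using hxr.le)
      rw [indicator_of_mem (by exact hwx)]
      have hfd : HasFDerivAt f (fderiv ℝ w x) x := by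
        rcases lt_abs.1 hwx with hp | hp
        · refine (hdx.hasFDerivAt.sub_const ε).congr_of_eventuallyEq ?_
          filter_upwards [hev, hcx.eventually_const_lt hp] with y hy1 hy2
          rw [hfw y hy1.le, min_eq_left hy2.le, max_eq_right (by linarith)]
        · refine (hdx.hasFDerivAt.sub_const (-ε)).congr_of_eventuallyEq ?_
          filter_upwards [hev, hcx.eventually_lt_const (show w x < -ε by linarith)] with y hy1 hy2
          rw [hfw y hy1.le, min_eq_right (by linarith), max_eq_left (by linarith)]
      refine Finset.sum_congr rfl fun i _ => ?_
      rw [(hfd.hasLineDerivAt _).lineDeriv, hχ, one_mul]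
    · rw [indicator_of_notMem (by simpa using hwx)]
      have hfd : HasFDerivAt f (0 : EuclideanSpace ℝ (Fin n) →L[ℝ] ℝ) x := by
        rcases lt_or_eq_of_le hwx with hlt | he
        · refine (hasFDerivAt_const (0:ℝ) x).congr_of_eventuallyEq ?_
          filter_upwards [hev, hcx.abs.eventually_lt_const hlt] with y hy1 hy2
          rw [hfw y hy1.le]
          exact aux_soft_zero hy2.le
        · have hw0 : HasFDerivAt w (0 : EuclideanSpace ℝ (Fin n) →L[ℝ] ℝ) x := by
            rcases (abs_eq hε.le).1 he with h1 | h1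
            · exact hl1 hxR h1
            · exact hl2 hxR h1
          rw [hasFDerivAt_iff_isLittleO] at hw0 ⊢
          simp only [_root_.zero_apply, sub_zero] at hw0 ⊢
          refine Asymptotics.IsBigO.trans_isLittleO (Asymptotics.IsBigO.of_bound 1 ?_) hw0
          filter_upwards [hev] with y hy
          rw [one_mul, hfw y hy.le, hfw x hx.le]
          exact aux_soft ε (w y) (w x) hε
      symm
      refine Finset.sum_eq_zero fun i _ => ?_
      rw [(hfd.hasLineDerivAt _).lineDeriv]
      simp

lemma aux_normsq {n : ℕ} (A : EuclideanSpace ℝ (Fin n) →L[ℝ] ℝ) :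
    ‖A‖ ^ 2 = ∑ i, (A (EuclideanSpace.single i 1)) ^ 2 := by
  obtain ⟨v, rfl⟩ := (InnerProductSpace.toDual ℝ (EuclideanSpace ℝ (Fin n))).surjective A
  rw [LinearIsometryEquiv.norm_map, EuclideanSpace.norm_sq_eq]
  simp [InnerProductSpace.toDual_apply_apply, EuclideanSpace.inner_single_right]

lemma aux_polar {n : ℕ} (A B : EuclideanSpace ℝ (Fin n) →L[ℝ] ℝ) :
    ‖A‖ ^ 2 - ‖B‖ ^ 2 = ‖A - B‖ ^ 2 + 2 * ∑ i, (A - B) (EuclideanSpace.single i 1) *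
      B (EuclideanSpace.single i 1) := by
  simp only [aux_normsq, Finset.mul_sum, ← Finset.sum_add_distrib, ← Finset.sum_sub_distrib]
  refine Finset.sum_congr rfl fun i _ => ?_
  rw [sub_apply]
  ring

lemma aux_cs {n : ℕ} (A B : EuclideanSpace ℝ (Fin n) →L[ℝ] ℝ) :
    |∑ i, A (EuclideanSpace.single i 1) * B (EuclideanSpace.single i 1)| ≤ ‖A‖ ^ 2 + ‖B‖ ^ 2 := by
  simp only [aux_normsq, ← Finset.sum_add_distrib]
  refine (Finset.abs_sum_le_sum_abs _ _).trans (Finset.sum_le_sum fun i _ => ?_)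
  rw [abs_le]
  constructor <;> nlinarith [sq_nonneg (A (EuclideanSpace.single i 1) + B (EuclideanSpace.single i 1)),
    sq_nonneg (A (EuclideanSpace.single i 1) - B (EuclideanSpace.single i 1)), sq_nonneg (A (EuclideanSpace.single i 1)), sq_nonneg (B (EuclideanSpace.single i 1))]



/-- There is `c > 0` depending only on `n` such that for any `ψ` Lipschitz
on `B̄_R` and any harmonic replacement `h` of `ψ` in `B_R` with finite Dirichlet energy,
`c ∫_{B_R} ‖Dψ − Dh‖² ≤ ∫_{B_R} (‖Dψ‖² − ‖Dh‖²)`. -/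
theorem harmonic_replacement_energy_inequality (n : ℕ) (hn : 2 ≤ n) :
    ∃ c > (0:ℝ), ∀ (R : ℝ), 0 < R →
      ∀ ψ h : EuclideanSpace ℝ (Fin n) → ℝ,
        (∃ K, LipschitzOnWith K ψ (closedBall (0 : EuclideanSpace ℝ (Fin n)) R)) →
        IsHarmRep n ψ h 0 R →
        IntegrableOn (fun x => ‖fderiv ℝ h x‖^2)
          (ball (0 : EuclideanSpace ℝ (Fin n)) R) volume →
        c * (∫ x in ball (0 : EuclideanSpace ℝ (Fin n)) R, ‖fderiv ℝ ψ x - fderiv ℝ h x‖^2) ≤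
          ∫ x in ball (0 : EuclideanSpace ℝ (Fin n)) R, (‖fderiv ℝ ψ x‖^2 - ‖fderiv ℝ h x‖^2) := by
  refine ⟨1, one_pos, ?_⟩
  rintro R hR ψ h ⟨K, hψ⟩ ⟨hcont, hc, hlap, hbd⟩ hint
  rw [one_mul]
  set μ := (volume : Measure (EuclideanSpace ℝ (Fin n))).restrict (ball 0 R) with hμ
  let w : EuclideanSpace ℝ (Fin n) → ℝ := fun x => ψ x - h x
  have hw : ContinuousOn w (closedBall 0 R) := hψ.continuousOn.sub hcont
  have hw0 : ∀ x ∈ sphere (0 : EuclideanSpace ℝ (Fin n)) R, w x = 0 := fun x hx => by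
    simp [w, hbd x hx]
  have hψL : ∀ r < R, ∃ K, LipschitzOnWith K ψ (closedBall 0 r) := fun r hr =>
    ⟨K, hψ.mono (closedBall_subset_closedBall hr.le)⟩
  have hL : ∀ r < R, ∃ K, LipschitzOnWith K w (closedBall 0 r) := by
    intro r hr
    obtain ⟨K1, h1⟩ := hψL r hr
    obtain ⟨K2, h2⟩ := aux_lip hc r hr
    exact ⟨K1 + K2, h1.sub h2⟩
  have hball : ∀ᵐ x ∂μ, x ∈ ball (0 : EuclideanSpace ℝ (Fin n)) R :=
    ae_restrict_mem measurableSet_ball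
  have hdw : ∀ᵐ x ∂μ, fderiv ℝ w x = fderiv ℝ ψ x - fderiv ℝ h x := by
    filter_upwards [ae_restrict_of_ae (aux_ae_diff hψL), hball] with x hx hxb
    exact fderiv_fun_sub (hx hxb)
      ((hc.differentiableOn (by norm_num)).differentiableAt (isOpen_ball.mem_nhds hxb))
  have hψb : ∀ᵐ x ∂μ, ‖fderiv ℝ ψ x‖ ≤ K := by
    filter_upwards [hball] with x hxb
    exact norm_fderiv_le_of_lipschitzOn ℝ (isOpen_ball.mem_nhds hxb)
      (hψ.mono ball_subset_closedBall)
  have hintb : Integrable (fun x => 2 * (K:ℝ) ^ 2 + 2 * ‖fderiv ℝ h x‖ ^ 2) μ := by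
    have : IsFiniteMeasure μ := ⟨by simpa [hμ] using measure_ball_lt_top⟩
    exact (integrable_const _).add (hint.const_mul 2)
  have hwb : ∀ᵐ x ∂μ, ‖fderiv ℝ w x‖ ^ 2 ≤ 2 * (K:ℝ) ^ 2 + 2 * ‖fderiv ℝ h x‖ ^ 2 := by
    filter_upwards [hdw, hψb] with x h1 h2
    rw [h1]
    have h3 := norm_sub_le (fderiv ℝ ψ x) (fderiv ℝ h x)
    have h4 := norm_nonneg (fderiv ℝ ψ x - fderiv ℝ h x)
    have h5 := norm_nonneg (fderiv ℝ ψ x)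
    nlinarith [sq_nonneg ((K:ℝ) - ‖fderiv ℝ h x‖), norm_nonneg (fderiv ℝ h x)]
  have hintw : Integrable (fun x => ‖fderiv ℝ w x‖ ^ 2) μ := by
    refine hintb.mono' ((measurable_fderiv ℝ w).norm.pow_const 2).aestronglyMeasurable ?_
    filter_upwards [hwb] with x hx
    rwa [Real.norm_of_nonneg (by positivity)]
  let P : EuclideanSpace ℝ (Fin n) → ℝ := fun x => ∑ i : Fin n,
      fderiv ℝ w x (EuclideanSpace.single i 1) * fderiv ℝ h x (EuclideanSpace.single i 1)
  have hPm : Measurable P := Finset.measurable_fun_sum _ fun i _ =>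
    (measurable_fderiv_apply_const ℝ w _).mul (measurable_fderiv_apply_const ℝ h _)
  have hPb : ∀ x, ‖P x‖ ≤ ‖fderiv ℝ w x‖ ^ 2 + ‖fderiv ℝ h x‖ ^ 2 := fun x => aux_cs _ _
  have hPi : Integrable P μ := (hintw.add hint).mono' hPm.aestronglyMeasurable
    (Filter.Eventually.of_forall hPb)
  have hP0 : ∫ x, P x ∂μ = 0 := by
    have hwm : AEMeasurable (fun x => |w x|) μ :=
      ((hw.mono ball_subset_closedBall).abs).aemeasurable measurableSet_ball
    have hlim : Tendsto (fun k : ℕ => ∫ x, {x | 1 / ((k:ℝ) + 1) < |w x|}.indicator P x ∂μ) atTop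
        (𝓝 (∫ x, P x ∂μ)) := by
      refine tendsto_integral_of_dominated_convergence
        (fun x => ‖fderiv ℝ w x‖ ^ 2 + ‖fderiv ℝ h x‖ ^ 2) ?_ (hintw.add hint) ?_ ?_
      · intro k
        exact hPm.aestronglyMeasurable.indicator₀ (nullMeasurableSet_lt aemeasurable_const hwm)
      · intro k
        exact Filter.Eventually.of_forall fun x => (norm_indicator_le_norm_self _ _).trans (hPb x)
      · filter_upwards [ae_restrict_of_ae (aux_ae_level hL 0), hball] with x hx hxb
        by_cases h0 : w x = 0
        · have : P x = 0 := by simp [P, (hx hxb h0).fderiv]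
          rw [this]
          refine tendsto_const_nhds.congr fun k => ?_
          rw [indicator_of_notMem]
          simp only [mem_ofPred_eq, h0, abs_zero, not_lt]
          positivity
        · obtain ⟨N, hN⟩ := exists_nat_one_div_lt (abs_pos.2 h0)
          refine tendsto_const_nhds.congr' ?_
          filter_upwards [eventually_ge_atTop N] with k hk
          rw [indicator_of_mem]
          exact lt_of_le_of_lt (Nat.one_div_le_one_div hk) hN
    refine tendsto_nhds_unique hlim (tendsto_const_nhds.congr fun k => ?_)
    exact (aux_main hR hc hlap hw hw0 hL (by positivity)).symm
  have h1 : ∫ x, ‖fderiv ℝ ψ x - fderiv ℝ h x‖ ^ 2 ∂μ = ∫ x, ‖fderiv ℝ w x‖ ^ 2 ∂μ :=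
    integral_congr_ae (by filter_upwards [hdw] with x hx; rw [hx])
  have h2 : ∫ x, (‖fderiv ℝ ψ x‖ ^ 2 - ‖fderiv ℝ h x‖ ^ 2) ∂μ =
      ∫ x, (‖fderiv ℝ w x‖ ^ 2 + 2 * P x) ∂μ :=
    integral_congr_ae (by
      filter_upwards [hdw] with x hx
      simp only [P]
      rw [aux_polar, hx])
  rw [h1, h2, integral_add hintw (hPi.const_mul 2), integral_const_mul, hP0]
  simp
end

section
/- Given β ∈ (0,1), there exists a constant C > 0, depending only on n and β, with the following property: if ψ : ℝⁿ → ℝ is Lipschitz on the closed ball B̄_R, h is a harmonic replacement of ψ in B_R with ∫_{B_R} ‖Dh‖² dx < ∞, then for every 0 < r ≤ R, ∫_{B_r} ‖Dψ − (Dψ)_r‖² dx ≤ C (r/R)^{n+2β} ∫_{B_R} ‖Dψ − (Dψ)_R‖² dx + C ∫_{B_R} ‖Dψ − Dh‖² dx, where (Dψ)_ρ denotes the average (1/|B_ρ|) ∫_{B_ρ} Dψ dx ∈ ℝⁿ. -/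
open MeasureTheory Metric Set Filter
/-- The average of the derivative of `ψ` over the ball `B_ρ = B_ρ(0)`. -/
noncomputable def avgDeriv (n : ℕ) (ψ : EuclideanSpace ℝ (Fin n) → ℝ) (ρ : ℝ) :
    EuclideanSpace ℝ (Fin n) →L[ℝ] ℝ :=
  (volume (ball (0 : EuclideanSpace ℝ (Fin n)) ρ)).toReal⁻¹ •
    ∫ x in ball (0 : EuclideanSpace ℝ (Fin n)) ρ, fderiv ℝ ψ x


lemma aux_maxsq (s : ℝ) : HasDerivAt (fun s : ℝ => (max s 0)^2) (2 * max s 0) s := by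
  rcases lt_trichotomy s 0 with hs | hs | hs
  · have : (fun s : ℝ => (max s 0)^2) =ᶠ[nhds s] fun _ => 0 := by
      filter_upwards [gt_mem_nhds hs] with u hu
      simp [max_eq_right hu.le]
    rw [max_eq_right hs.le, mul_zero]
    exact (hasDerivAt_const s (0:ℝ)).congr_of_eventuallyEq this
  · subst hs
    rw [max_self, mul_zero, hasDerivAt_iff_isLittleO_nhds_zero]
    simp only [zero_add, max_self, smul_zero, sub_zero, ne_eq, OfNat.ofNat_ne_zero,
      not_false_eq_true, zero_pow]
    have h1 : (fun h : ℝ => (max h 0)^2) =O[nhds 0] fun h : ℝ => h^2 := by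
      apply Asymptotics.IsBigO.of_bound 1
      filter_upwards with u
      rw [one_mul, norm_pow, norm_pow]
      gcongr
      rcases le_total u 0 with h | h
      · simp [max_eq_right h]
      · simp [max_eq_left h]
    refine h1.trans_isLittleO ?_
    simpa using Asymptotics.isLittleO_pow_pow (𝕜 := ℝ) (m := 1) (n := 2) (by norm_num)
  · have : (fun s : ℝ => (max s 0)^2) =ᶠ[nhds s] fun u => u^2 := by
      filter_upwards [lt_mem_nhds hs] with u hu
      simp [max_eq_left hu.le]
    rw [max_eq_left hs.le]
    have h2 := hasDerivAt_pow 2 s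
    norm_num at h2
    exact h2.congr_of_eventuallyEq this

/-- radial bump -/
noncomputable def bumpφ {n : ℕ} (y : EuclideanSpace ℝ (Fin n)) : ℝ := max (1 - ‖y‖^2) 0

lemma bumpφ_cont {n : ℕ} : Continuous (bumpφ (n := n)) := by unfold bumpφ; fun_prop
lemma bumpφ_nonneg {n : ℕ} (y : EuclideanSpace ℝ (Fin n)) : 0 ≤ bumpφ y := le_max_right _ _
lemma bumpφ_zero {n : ℕ} (y : EuclideanSpace ℝ (Fin n)) (hy : 1 ≤ ‖y‖) : bumpφ y = 0 :=
  max_eq_right (by nlinarith)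
lemma bumpφ_supp {n : ℕ} : HasCompactSupport (bumpφ (n := n)) := by
  apply HasCompactSupport.of_support_subset_isCompact (isCompact_closedBall 0 1)
  intro y hy
  by_contra h
  simp at h
  exact hy (bumpφ_zero y h.le)
lemma bumpφ_int {n : ℕ} : 0 < ∫ y : EuclideanSpace ℝ (Fin n), bumpφ y := by
  apply bumpφ_cont.integral_pos_of_hasCompactSupport_nonneg_nonzero bumpφ_supp
    (fun y => bumpφ_nonneg y) (x := 0)
  simp [bumpφ]
lemma bumpφ_lip {n : ℕ} (y z : EuclideanSpace ℝ (Fin n)) :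
    |bumpφ y - bumpφ z| ≤ 2 * ‖y - z‖ := by
  have key : ∀ a b : ℝ, 0 ≤ a → 0 ≤ b → max (1 - a^2) 0 - max (1-b^2) 0 ≤ 2 * |a-b| := by
    intro a b ha hb
    have := neg_abs_le (a-b)
    have := abs_nonneg (a-b)
    have h0 := le_max_right (1-b^2) 0
    have h1 := le_max_left (1-b^2) 0
    rcases le_total (1-a^2) 0 with h | h
    · rw [max_eq_right h]; linarith
    · rw [max_eq_left h]
      have ha1 : a ≤ 1 := by nlinarith
      rcases le_total b 1 with hb1 | hb1
      · nlinarith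
      · nlinarith
  have h1 := key ‖y‖ ‖z‖ (norm_nonneg _) (norm_nonneg _)
  have h2 := key ‖z‖ ‖y‖ (norm_nonneg _) (norm_nonneg _)
  have h3 := abs_norm_sub_norm_le y z
  rw [abs_sub_comm] at h2
  unfold bumpφ
  rw [abs_le]; constructor <;> linarith

lemma bumpφ_sq_deriv {n : ℕ} (y : EuclideanSpace ℝ (Fin n)) :
    HasFDerivAt (fun y : EuclideanSpace ℝ (Fin n) => (bumpφ y)^2)
      ((-4 * bumpφ y) • innerSL ℝ y) y := by
  have h1 : HasFDerivAt (fun y : EuclideanSpace ℝ (Fin n) => 1 - ‖y‖^2) (-(2 • innerSL ℝ y)) y :=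
    (hasStrictFDerivAt_norm_sq y).hasFDerivAt.const_sub 1
  have h2 := (aux_maxsq (1 - ‖y‖^2)).comp_hasFDerivAt y h1
  refine h2.congr_fderiv ?_
  ext v
  simp [bumpφ]
  ring

lemma ibp {n : ℕ} (H : EuclideanSpace ℝ (Fin n) → ℝ) (hH : ContDiff ℝ 2 H)
    (x : EuclideanSpace ℝ (Fin n)) (t : ℝ) :
    ∫ y, fderiv ℝ H (x + t • y) y * bumpφ y =
      ∫ y, t / 4 * (∑ i : Fin n, fderiv ℝ (fderiv ℝ H) (x + t • y) (EuclideanSpace.single i 1)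
      (EuclideanSpace.single i 1)) * (bumpφ y)^2 := by
  have hH1 : ContDiff ℝ 1 (fderiv ℝ H) := hH.fderiv_right (by norm_num)
  have hc1 : Continuous (fderiv ℝ H) := hH1.continuous
  have hc2 : Continuous (fderiv ℝ (fderiv ℝ H)) := hH1.continuous_fderiv (by norm_num)
  have hφ := bumpφ_cont (n := n)
  have hIntg : ∀ f : EuclideanSpace ℝ (Fin n) → ℝ, Continuous f →
      Integrable (fun y => f y * bumpφ y) := fun f hf =>
    (hf.mul hφ).integrable_of_hasCompactSupport bumpφ_supp.mul_left
  have key : ∀ i : Fin n, ∫ y, fderiv ℝ H (x + t • y) (EuclideanSpace.single i 1) *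
      (y i * bumpφ y) = ∫ y, t / 4 * fderiv ℝ (fderiv ℝ H) (x + t • y) (EuclideanSpace.single i 1)
      (EuclideanSpace.single i 1) * (bumpφ y)^2 := by
    intro i
    set e : EuclideanSpace ℝ (Fin n) := EuclideanSpace.single i 1
    have hf : ∀ y, HasFDerivAt (fun y => fderiv ℝ H (x + t • y) e)
        (t • (fderiv ℝ (fderiv ℝ H) (x + t • y)).flip e) y := by
      intro y
      have h1 : HasFDerivAt (fun y => x + t • y)
          (t • ContinuousLinearMap.id ℝ (EuclideanSpace ℝ (Fin n))) y :=
        ((hasFDerivAt_id y).const_smul t).const_add x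
      have h2 := ((hH1.differentiable (by norm_num)) (x + t • y)).hasFDerivAt.comp y h1
      have h3 := h2.clm_apply (hasFDerivAt_const e y)
      refine h3.congr_fderiv ?_
      ext v
      simp
    have := integral_bilinear_hasFDerivAt_right_eq_neg_left_of_integrable (μ := volume)
      (B := ContinuousLinearMap.mul ℝ ℝ) (v := e)
      (f := fun y => fderiv ℝ H (x + t • y) e)
      (f' := fun y => (t • (fderiv ℝ (fderiv ℝ H) (x + t • y)).flip e))
      (g := fun y => (bumpφ y)^2) (g' := fun y => ((-4 * bumpφ y) • innerSL ℝ y))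
      ?_ ?_ ?_ (fun y _ => hf y) (fun y _ => bumpφ_sq_deriv y)
    · simp only [ContinuousLinearMap.mul_apply', _root_.smul_apply,
        ContinuousLinearMap.flip_apply, smul_eq_mul, innerSL_apply_apply] at this
      have he : ∀ y : EuclideanSpace ℝ (Fin n), inner ℝ y e = y i := by
        intro y; simp [e, EuclideanSpace.inner_single_right]
      simp only [he] at this
      calc _ = (-1/4) * ∫ y, fderiv ℝ H (x + t • y) e * (-4 * bumpφ y * y i) := by
            rw [← integral_const_mul]; congr 1; ext y; ring
        _ = _ := by
            rw [this, ← integral_neg, ← integral_const_mul]; congr 1; ext y; ring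
    · have := hIntg (fun y => (t * fderiv ℝ (fderiv ℝ H) (x + t • y) e e) * bumpφ y) (by fun_prop)
      refine this.congr (ae_of_all _ fun y => ?_)
      simp; ring
    · have := hIntg (fun y => fderiv ℝ H (x + t • y) e * (-4 * inner ℝ y e)) (by fun_prop)
      refine this.congr (ae_of_all _ fun y => ?_)
      simp; ring
    · have := hIntg (fun y => fderiv ℝ H (x + t • y) e * bumpφ y) (by fun_prop)
      refine this.congr (ae_of_all _ fun y => ?_)
      simp; ring
  have hdec : ∀ y : EuclideanSpace ℝ (Fin n), ∀ L : EuclideanSpace ℝ (Fin n) →L[ℝ] ℝ,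
      L y = ∑ i, L (EuclideanSpace.single i 1) * y i := by
    intro y L
    conv_lhs => rw [← (EuclideanSpace.basisFun (Fin n) ℝ).sum_repr y]
    simp [map_sum, mul_comm]
  calc _ = ∫ y, ∑ i, fderiv ℝ H (x + t • y) (EuclideanSpace.single i 1) * (y i * bumpφ y) := by
        congr 1; ext y
        rw [hdec y (fderiv ℝ H (x + t • y)), Finset.sum_mul]
        exact Finset.sum_congr rfl fun i _ => by ring
    _ = ∑ i, ∫ y, fderiv ℝ H (x + t • y) (EuclideanSpace.single i 1) * (y i * bumpφ y) := by
        apply integral_finsetSum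
        intro i _
        have := hIntg (fun y => fderiv ℝ H (x + t • y) (EuclideanSpace.single i 1) * y i)
          (by fun_prop)
        simpa only [mul_assoc] using this
    _ = _ := by
        simp_rw [key]
        rw [← integral_finsetSum]
        · congr 1; ext y
          rw [Finset.mul_sum, Finset.sum_mul]
        · intro i _
          have := hIntg (fun y => t / 4 * fderiv ℝ (fderiv ℝ H) (x + t • y)
            (EuclideanSpace.single i 1) (EuclideanSpace.single i 1) * bumpφ y) (by fun_prop)
          simpa only [mul_assoc, pow_two] using this

/-- mean value property -/
lemma mvp {n : ℕ} (H : EuclideanSpace ℝ (Fin n) → ℝ) (hH : ContDiff ℝ 2 H)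
    (hs : HasCompactSupport H)
    (x : EuclideanSpace ℝ (Fin n)) (ρ : ℝ) (hρ : 0 ≤ ρ)
    (hh : ∀ z ∈ ball x ρ, ∑ i : Fin n, fderiv ℝ (fderiv ℝ H) z (EuclideanSpace.single i 1)
      (EuclideanSpace.single i 1) = 0) :
    ∫ y, H (x + ρ • y) * bumpφ y = H x * ∫ y : EuclideanSpace ℝ (Fin n), bumpφ y := by
  have hc : Continuous H := hH.continuous
  have hc1 : Continuous (fderiv ℝ H) := hH.continuous_fderiv (by norm_num)
  have hφ := bumpφ_cont (n := n)
  have hIntg : ∀ f : EuclideanSpace ℝ (Fin n) → ℝ, Continuous f →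
      Integrable (fun y => f y * bumpφ y) := fun f hf =>
    (hf.mul hφ).integrable_of_hasCompactSupport bumpφ_supp.mul_left
  obtain ⟨M, hM⟩ := (hs.fderiv (𝕜 := ℝ)).exists_bound_of_continuous hc1
  have hd : ∀ t : ℝ, HasDerivAt (fun t : ℝ => ∫ y, H (x + t • y) * bumpφ y)
      (∫ y, fderiv ℝ H (x + t • y) y * bumpφ y) t := by
    intro t
    refine (hasDerivAt_integral_of_dominated_loc_of_deriv_le (s := univ)
      (F' := fun t y => fderiv ℝ H (x + t • y) y * bumpφ y)
      (bound := fun y => (M * ‖y‖) * bumpφ y) univ_mem ?_ ?_ ?_ ?_ ?_ ?_).2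
    · filter_upwards with t
      exact (hIntg (fun y => H (x + t • y)) (by fun_prop)).aestronglyMeasurable
    · exact (hIntg (fun y => H (x + t • y)) (by fun_prop))
    · exact (hIntg (fun y => fderiv ℝ H (x + t • y) y) (by fun_prop)).aestronglyMeasurable
    · filter_upwards with y t _
      rw [norm_mul, Real.norm_of_nonneg (bumpφ_nonneg y)]
      gcongr
      · exact bumpφ_nonneg y
      · exact ((fderiv ℝ H (x + t • y)).le_opNorm y).trans
          (mul_le_mul_of_nonneg_right (hM _) (norm_nonneg _))
    · exact hIntg _ (by fun_prop)
    · filter_upwards with y t _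
      have h1 : HasDerivAt (fun t : ℝ => x + t • y) y t := by
        simpa using ((hasDerivAt_id t).smul_const y).const_add x
      exact ((hH.differentiable (by norm_num) (x + t • y)).hasFDerivAt.comp_hasDerivAt t h1).mul_const _
  have h0 : ∀ t ∈ Ico 0 ρ, ∫ y, fderiv ℝ H (x + t • y) y * bumpφ y = 0 := by
    intro t ht
    rw [ibp H hH x t]
    apply integral_eq_zero_of_ae
    filter_upwards with y
    rcases le_total 1 ‖y‖ with hy | hy
    · simp [bumpφ_zero y hy]
    · rw [hh]
      · simp
      · rw [mem_ball_iff_norm, add_sub_cancel_left, norm_smul, Real.norm_of_nonneg ht.1]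
        nlinarith [ht.1, ht.2]
  have := constant_of_has_deriv_right_zero (a := 0) (b := ρ)
    (f := fun t : ℝ => ∫ y, H (x + t • y) * bumpφ y)
    (fun t _ => (hd t).continuousAt.continuousWithinAt)
    (fun t ht => by
      have := (hd t).hasDerivWithinAt (s := Ici t)
      rwa [h0 t ht] at this) ρ ⟨hρ, le_rfl⟩
  rw [this]
  simp [integral_const_mul]

lemma mvp_deriv {n : ℕ} (H : EuclideanSpace ℝ (Fin n) → ℝ) (hH : ContDiff ℝ 2 H)
    (hs : HasCompactSupport H)
    (x : EuclideanSpace ℝ (Fin n)) (ρ ρ' : ℝ) (hρ : 0 ≤ ρ) (hρ' : ρ < ρ')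
    (hh : ∀ z ∈ ball x ρ', ∑ i : Fin n, fderiv ℝ (fderiv ℝ H) z (EuclideanSpace.single i 1)
      (EuclideanSpace.single i 1) = 0) :
    ∫ y, bumpφ y • fderiv ℝ H (x + ρ • y) =
      (∫ y : EuclideanSpace ℝ (Fin n), bumpφ y) • fderiv ℝ H x := by
  have hc : Continuous H := hH.continuous
  have hc1 : Continuous (fderiv ℝ H) := hH.continuous_fderiv (by norm_num)
  have hφ := bumpφ_cont (n := n)
  obtain ⟨M, hM⟩ := (hs.fderiv (𝕜 := ℝ)).exists_bound_of_continuous hc1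
  have hd : HasFDerivAt (fun x => ∫ y, H (x + ρ • y) * bumpφ y)
      (∫ y, bumpφ y • fderiv ℝ H (x + ρ • y)) x := by
    refine (hasFDerivAt_integral_of_dominated_of_fderiv_le (s := univ) (𝕜 := ℝ)
      (F' := fun x y => bumpφ y • fderiv ℝ H (x + ρ • y))
      (bound := fun y => M * bumpφ y) univ_mem ?_ ?_ ?_ ?_ ?_ ?_)
    · filter_upwards with t
      exact Continuous.aestronglyMeasurable (by fun_prop)
    · exact Continuous.integrable_of_hasCompactSupport (by fun_prop) bumpφ_supp.mul_left
    · exact Continuous.aestronglyMeasurable (by fun_prop)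
    · filter_upwards with y t _
      rw [norm_smul, Real.norm_of_nonneg (bumpφ_nonneg y), mul_comm]
      gcongr
      · exact bumpφ_nonneg y
      · exact hM _
    · exact Continuous.integrable_of_hasCompactSupport (by fun_prop) bumpφ_supp.mul_left
    · filter_upwards with y t _
      have h1 : HasFDerivAt (fun t => t + ρ • y)
          (ContinuousLinearMap.id ℝ (EuclideanSpace ℝ (Fin n))) t :=
        (hasFDerivAt_id t).add_const _
      exact ((hH.differentiable (by norm_num) (t + ρ • y)).hasFDerivAt.comp t h1).mul_const _
  have hd2 : HasFDerivAt (fun x => H x * ∫ y : EuclideanSpace ℝ (Fin n), bumpφ y)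
      ((∫ y : EuclideanSpace ℝ (Fin n), bumpφ y) • fderiv ℝ H x) x :=
    (hH.differentiable (by norm_num) x).hasFDerivAt.mul_const _
  have heq : (fun x => ∫ y, H (x + ρ • y) * bumpφ y) =ᶠ[nhds x]
      (fun x => H x * ∫ y : EuclideanSpace ℝ (Fin n), bumpφ y) := by
    filter_upwards [ball_mem_nhds x (sub_pos.2 hρ')] with x' hx'
    refine mvp H hH hs x' ρ hρ fun z hz => hh z ?_
    rw [mem_ball] at *
    linarith [dist_triangle z x' x]
  exact hd.unique (hd2.congr_of_eventuallyEq heq)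

lemma chg {n : ℕ} (f : EuclideanSpace ℝ (Fin n) → EuclideanSpace ℝ (Fin n) →L[ℝ] ℝ)
    (x : EuclideanSpace ℝ (Fin n)) (ρ : ℝ) (hρ : 0 < ρ) :
    ∫ z, bumpφ (ρ⁻¹ • (z - x)) • f z = ρ ^ n • ∫ y, bumpφ y • f (x + ρ • y) := by
  have h1 := Measure.integral_comp_smul_of_nonneg volume
    (fun z => bumpφ (ρ⁻¹ • z) • f (x + z)) ρ (hR := hρ.le)
  have h2 := integral_add_left_eq_self (μ := volume)
    (fun z => bumpφ (ρ⁻¹ • (z - x)) • f z) x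
  simp only [add_sub_cancel_left] at h2
  rw [← h2]
  simp only [smul_smul, inv_mul_cancel₀ hρ.ne', one_smul, finrank_euclideanSpace,
    Fintype.card_fin] at h1
  rw [h1, smul_smul, mul_inv_cancel₀ (pow_pos hρ _).ne', one_smul]

lemma grad_est {n : ℕ} (h : EuclideanSpace ℝ (Fin n) → ℝ) (R : ℝ) (hR : 0 < R)
    (hC : ContDiffOn ℝ 2 h (ball 0 R))
    (hh : ∀ z ∈ ball 0 R, ∑ i : Fin n, fderiv ℝ (fderiv ℝ h) z (EuclideanSpace.single i 1)
      (EuclideanSpace.single i 1) = 0)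
    (L : EuclideanSpace ℝ (Fin n) →L[ℝ] ℝ)
    (hL : IntegrableOn (fun x => ‖fderiv ℝ h x - L‖) (ball 0 R))
    (x : EuclideanSpace ℝ (Fin n)) (hx : x ∈ ball 0 (R/2)) :
    ‖fderiv ℝ h x - fderiv ℝ h 0‖ ≤
      (8 * 4 ^ n / ∫ y : EuclideanSpace ℝ (Fin n), bumpφ y) * (‖x‖ / R ^ (n+1)) *
        ∫ z in ball 0 R, ‖fderiv ℝ h z - L‖ := by
  set c := ∫ y : EuclideanSpace ℝ (Fin n), bumpφ y with hcdef
  have hcpos : 0 < c := bumpφ_int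
  let χ : ContDiffBump (0 : EuclideanSpace ℝ (Fin n)) := ⟨3*R/4, 7*R/8, by linarith, by linarith⟩
  set H : EuclideanSpace ℝ (Fin n) → ℝ := fun x => χ x * h x with hHdef
  have hHsupp : HasCompactSupport H := χ.hasCompactSupport.mul_right
  have hH : ContDiff ℝ 2 H := by
    rw [contDiff_iff_contDiffAt]
    intro z
    by_cases hz : z ∈ ball 0 R
    · exact χ.contDiff.contDiffAt.mul (hC.contDiffAt (isOpen_ball.mem_nhds hz))
    · have : z ∉ tsupport H := by
        intro hz'
        have h1 := tsupport_mul_subset_left hz'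
        rw [χ.tsupport_eq] at h1
        simp [χ] at h1 hz
        linarith
      have h2 := notMem_tsupport_iff_eventuallyEq.1 this
      exact (contDiffAt_const (c := (0:ℝ))).congr_of_eventuallyEq h2
  have hEq : ∀ z ∈ ball (0 : EuclideanSpace ℝ (Fin n)) (3*R/4), H =ᶠ[nhds z] h := by
    intro z hz
    filter_upwards [isOpen_ball.mem_nhds hz] with w hw
    have : χ w = 1 := χ.one_of_mem_closedBall (ball_subset_closedBall hw)
    simp [hHdef, this]
  have hD : ∀ z ∈ ball (0 : EuclideanSpace ℝ (Fin n)) (3*R/4), fderiv ℝ H z = fderiv ℝ h z :=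
    fun z hz => (hEq z hz).fderiv_eq
  have hlap : ∀ z ∈ ball (0 : EuclideanSpace ℝ (Fin n)) (3*R/4),
      ∑ i : Fin n, fderiv ℝ (fderiv ℝ H) z (EuclideanSpace.single i 1)
      (EuclideanSpace.single i 1) = 0 := by
    intro z hz
    rw [(hEq z hz).fderiv.fderiv_eq]
    exact hh z (ball_subset_ball (by linarith) hz)
  have hc1 : Continuous (fderiv ℝ H) := hH.continuous_fderiv (by norm_num)
  have hφ := bumpφ_cont (n := n)
  set ρ := R / 4 with hρdef
  have hρ : 0 < ρ := by positivity
  have hIntgφ : ∀ (x : EuclideanSpace ℝ (Fin n)),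
      ∀ f : EuclideanSpace ℝ (Fin n) → EuclideanSpace ℝ (Fin n) →L[ℝ] ℝ, Continuous f →
      Integrable (fun z => bumpφ (ρ⁻¹ • (z - x)) • f z) := by
    intro x f hf
    apply Continuous.integrable_of_hasCompactSupport (by fun_prop)
    apply HasCompactSupport.of_support_subset_isCompact (isCompact_closedBall x ρ)
    intro z hz
    by_contra hz'
    apply hz
    simp only
    rw [bumpφ_zero, zero_smul]
    rw [norm_smul, norm_inv, Real.norm_of_nonneg hρ.le]
    rw [mem_closedBall_iff_norm, not_le] at hz'
    rw [← div_eq_inv_mul, one_le_div hρ]; exact hz'.le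
  have hrep : ∀ x ∈ ball (0 : EuclideanSpace ℝ (Fin n)) (R/2),
      ∫ z, bumpφ (ρ⁻¹ • (z - x)) • (fderiv ℝ H z - L) = (ρ ^ n * c) • (fderiv ℝ h x - L) := by
    intro x hx
    rw [mem_ball_zero_iff] at hx
    have h1 : ∫ y, bumpφ y • fderiv ℝ H (x + ρ • y) = c • fderiv ℝ H x := by
      refine mvp_deriv H hH hHsupp x ρ (3*R/4 - ‖x‖) hρ.le (by linarith) fun z hz => hlap z ?_
      rw [mem_ball_iff_norm] at hz
      rw [mem_ball_zero_iff]
      linarith [norm_le_norm_add_norm_sub' z x]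
    have h2 := chg (fderiv ℝ H) x ρ hρ
    have h3 := chg (fun _ => L) x ρ hρ
    simp only [smul_sub (bumpφ _)]
    rw [integral_sub (hIntgφ x _ hc1) (hIntgφ x _ continuous_const), h2, h3, h1,
      integral_smul_const, hD x (by rw [mem_ball_zero_iff]; linarith)]
    module
  have h0 : (0 : EuclideanSpace ℝ (Fin n)) ∈ ball (0 : EuclideanSpace ℝ (Fin n)) (R/2) :=
    mem_ball_self (by positivity)
  have hkey : (ρ ^ n * c) • (fderiv ℝ h x - fderiv ℝ h 0) =
      ∫ z, (bumpφ (ρ⁻¹ • (z - x)) - bumpφ (ρ⁻¹ • (z - 0))) • (fderiv ℝ H z - L) := by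
    simp only [sub_smul]
    rw [integral_sub (hIntgφ x _ (by fun_prop)) (hIntgφ 0 _ (by fun_prop)), hrep x hx, hrep 0 h0]
    module
  have hzero : ∀ x ∈ ball (0 : EuclideanSpace ℝ (Fin n)) (R/2),
      ∀ z ∉ ball (0 : EuclideanSpace ℝ (Fin n)) (3*R/4), bumpφ (ρ⁻¹ • (z - x)) = 0 := by
    intro x hx z hz
    rw [mem_ball_zero_iff] at hx hz
    apply bumpφ_zero
    rw [norm_smul, norm_inv, Real.norm_of_nonneg hρ.le, ← div_eq_inv_mul, one_le_div hρ]
    linarith [norm_le_norm_add_norm_sub' z x]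
  have hbd : ‖(ρ ^ n * c) • (fderiv ℝ h x - fderiv ℝ h 0)‖ ≤
      (2 * ‖x‖ / ρ) * ∫ z in ball 0 R, ‖fderiv ℝ h z - L‖ := by
    rw [hkey, ← setIntegral_eq_integral_of_forall_compl_eq_zero (s := ball 0 R),
      ← integral_const_mul]
    · apply norm_integral_le_of_norm_le (hL.const_mul _)
      filter_upwards with z
      by_cases hz : z ∈ ball (0 : EuclideanSpace ℝ (Fin n)) (3*R/4)
      · rw [norm_smul, hD z hz]
        gcongr
        refine (bumpφ_lip _ _).trans (le_of_eq ?_)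
        rw [← smul_sub, norm_smul, norm_inv, Real.norm_of_nonneg hρ.le]
        simp
        ring
      · rw [hzero x hx z hz, hzero 0 h0 z hz]
        simp
        positivity
    · intro z hz
      have hz' : z ∉ ball (0 : EuclideanSpace ℝ (Fin n)) (3*R/4) :=
        fun h => hz (ball_subset_ball (by linarith) h)
      rw [hzero x hx z hz', hzero 0 h0 z hz']
      simp
  rw [norm_smul, Real.norm_of_nonneg (by positivity)] at hbd
  rw [mul_comm, ← le_div_iff₀ (by positivity)] at hbd
  refine hbd.trans (le_of_eq ?_)
  rw [hρdef, div_pow]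
  field_simp
  ring

lemma jensen2 {α : Type*} [MeasurableSpace α] (μ : Measure α) [IsFiniteMeasure μ] (g : α → ℝ)
    (hg : MemLp g 2 μ) : (∫ x, g x ∂μ)^2 ≤ μ.real univ * ∫ x, (g x)^2 ∂μ := by
  have hg1 : Integrable g μ := hg.integrable (by norm_num)
  have hg2 : Integrable (fun x => (g x)^2) μ := hg.integrable_sq
  set V := μ.real univ with hV
  set I := ∫ x, g x ∂μ with hI
  have h0 : 0 ≤ ∫ x, (V * g x - I)^2 ∂μ := integral_nonneg fun x => sq_nonneg _
  have h1 : ∫ x, (V * g x - I)^2 ∂μ = V^2 * (∫ x, (g x)^2 ∂μ) - 2 * V * I * I + I^2 * V := by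
    have : ∀ x, (V * g x - I)^2 = V^2 * (g x)^2 - (2 * V * I) * g x + I^2 := fun x => by ring
    simp_rw [this]
    have hsub : Integrable (fun x => V^2 * (g x)^2 - (2 * V * I) * g x) μ :=
      (hg2.const_mul _).sub (hg1.const_mul _)
    rw [integral_add hsub (integrable_const _), integral_sub (hg2.const_mul _) (hg1.const_mul _), integral_const_mul, integral_const_mul,
      integral_const, smul_eq_mul, mul_comm V (I^2)]
  rcases (measureReal_nonneg : 0 ≤ μ.real univ).eq_or_lt with hz | hpos
  · have : μ = 0 := by
      have := (measureReal_eq_zero_iff (μ := μ) (s := univ)).1 hz.symm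
      simpa using this
    subst this
    simp [hI]
  · rw [h1] at h0
    have : 0 ≤ V * (V * (∫ x, (g x)^2 ∂μ) - I^2) := by linarith
    have := nonneg_of_mul_nonneg_right this hpos
    linarith

lemma avg_le {α F : Type*} [MeasurableSpace α] [NormedAddCommGroup F] [NormedSpace ℝ F]
    [CompleteSpace F]
    (μ : Measure α) [IsFiniteMeasure μ] (f : α → F) (hV : 0 < μ.real univ)
    (hf : MemLp f 2 μ) (A : F) :
    ∫ x, ‖f x - (μ.real univ)⁻¹ • ∫ y, f y ∂μ‖^2 ∂μ ≤ 4 * ∫ x, ‖f x - A‖^2 ∂μ := by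
  have hm : ∀ B : F, MemLp (fun x => f x - B) 2 μ := fun B => hf.sub (memLp_const B)
  have hi : ∀ B : F, Integrable (fun x => ‖f x - B‖^2) μ := fun B =>
    (hm B).norm.integrable_sq
  set V := μ.real univ
  set a := V⁻¹ • ∫ y, f y ∂μ with ha
  have hf1 : Integrable f μ := hf.integrable (by norm_num)
  have h1 : V • (a - A) = ∫ x, (f x - A) ∂μ := by
    rw [integral_sub hf1 (integrable_const _), integral_const, smul_sub, ha, smul_smul,
      mul_inv_cancel₀ hV.ne', one_smul]
  have h2 : V * ‖a - A‖ ≤ ∫ x, ‖f x - A‖ ∂μ := by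
    rw [← abs_of_pos hV, ← Real.norm_eq_abs, ← norm_smul, h1]
    exact norm_integral_le_integral_norm _
  have h3 := jensen2 μ _ (hm A).norm
  have h4 : V * ‖a - A‖^2 ≤ ∫ x, ‖f x - A‖^2 ∂μ := by
    have h5 : (V * ‖a - A‖)^2 ≤ V * ∫ x, ‖f x - A‖^2 ∂μ :=
      (pow_le_pow_left₀ (by positivity) h2 2).trans h3
    have : V * (V * ‖a - A‖^2) ≤ V * ∫ x, ‖f x - A‖^2 ∂μ := by linarith
    exact le_of_mul_le_mul_left this hV
  have h6 : ∫ x, ‖f x - a‖^2 ∂μ ≤ ∫ x, (2 * ‖f x - A‖^2 + 2 * ‖a - A‖^2) ∂μ := by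
    apply integral_mono (hi a) (((hi A).const_mul 2).add (integrable_const _))
    intro x
    have : ‖f x - a‖ ≤ ‖f x - A‖ + ‖a - A‖ := by
      rw [← sub_sub_sub_cancel_right (f x) a A]; exact norm_sub_le _ _
    simp only [Pi.add_apply]
    nlinarith [norm_nonneg (f x - a), sq_nonneg (‖f x - A‖ - ‖a - A‖)]
  rw [integral_add ((hi A).const_mul 2) (integrable_const _), integral_const_mul, integral_const,
    smul_eq_mul] at h6
  change _ ≤ _ + V * _ at h6
  linarith

/-- Given `β ∈ (0,1)`, there is `C > 0` depending only on `n` and `β` such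
that for `ψ` Lipschitz on `B̄_R`, `h` a harmonic replacement of `ψ` in `B_R` with finite
Dirichlet energy, and `0 < r ≤ R`:
`∫_{B_r} ‖Dψ − (Dψ)_r‖² ≤ C (r/R)^{n+2β} ∫_{B_R} ‖Dψ − (Dψ)_R‖² + C ∫_{B_R} ‖Dψ − Dh‖²`. -/
theorem decay_in_terms_of_harmonic_replacement (n : ℕ) (hn : 2 ≤ n)
    (β : ℝ) (hβ : β ∈ Set.Ioo (0:ℝ) 1) :
    ∃ C > (0:ℝ), ∀ (R : ℝ), 0 < R →
      ∀ ψ h : EuclideanSpace ℝ (Fin n) → ℝ,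
        (∃ K, LipschitzOnWith K ψ (closedBall (0 : EuclideanSpace ℝ (Fin n)) R)) →
        IsHarmRep n ψ h 0 R →
        IntegrableOn (fun x => ‖fderiv ℝ h x‖^2)
          (ball (0 : EuclideanSpace ℝ (Fin n)) R) volume →
        ∀ r : ℝ, 0 < r → r ≤ R →
          (∫ x in ball (0 : EuclideanSpace ℝ (Fin n)) r,
              ‖fderiv ℝ ψ x - avgDeriv n ψ r‖^2) ≤
            C * (r / R) ^ ((n : ℝ) + 2 * β) *
              (∫ x in ball (0 : EuclideanSpace ℝ (Fin n)) R,
                ‖fderiv ℝ ψ x - avgDeriv n ψ R‖^2) +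
            C * ∫ x in ball (0 : EuclideanSpace ℝ (Fin n)) R,
                ‖fderiv ℝ ψ x - fderiv ℝ h x‖^2 := by
  obtain ⟨hβ0, hβ1⟩ := hβ
  set v := (volume (ball (0 : EuclideanSpace ℝ (Fin n)) 1)).toReal with hv
  set c0 : ℝ := 8 * 4 ^ n / ∫ y : EuclideanSpace ℝ (Fin n), bumpφ y with hc0
  have hc0pos : 0 < c0 := by have := bumpφ_int (n := n); positivity
  have hvpos : 0 < v := ENNReal.toReal_pos (measure_ball_pos _ _ one_pos).ne' measure_ball_lt_top.ne
  set K0 := c0^2 * v^2 with hK0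
  have hK0pos : 0 < K0 := by positivity
  refine ⟨8 + 16 * K0 + 4 * 2 ^ (n+2), by positivity, ?_⟩
  rintro R hR ψ h ⟨K, hK⟩ ⟨-, hC2, hlap, -⟩ hIntg r hr hrR
  have hvol : ∀ s : ℝ, 0 < s → volume.real (ball (0 : EuclideanSpace ℝ (Fin n)) s) = s^n * v := by
    intro s hs
    rw [measureReal_def, Measure.addHaar_ball_of_pos _ _ hs, ENNReal.toReal_mul,
      ENNReal.toReal_ofReal (by positivity), finrank_euclideanSpace, Fintype.card_fin]
  have hsub : ball (0 : EuclideanSpace ℝ (Fin n)) r ⊆ ball 0 R := ball_subset_ball hrR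
  set μR := volume.restrict (ball (0 : EuclideanSpace ℝ (Fin n)) R) with hμR
  set μr := volume.restrict (ball (0 : EuclideanSpace ℝ (Fin n)) r) with hμr
  have hle : μr ≤ μR := Measure.restrict_mono hsub le_rfl
  have : IsFiniteMeasure μR := ⟨by simp [μR, measure_ball_lt_top]⟩
  have : IsFiniteMeasure μr := ⟨by simp [μr, measure_ball_lt_top]⟩
  have hψ : MemLp (fderiv ℝ ψ) 2 μR := by
    apply MemLp.of_bound (measurable_fderiv ℝ ψ).aestronglyMeasurable (K : ℝ)
    filter_upwards [ae_restrict_mem measurableSet_ball] with x hx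
    exact norm_fderiv_le_of_lipschitzOn ℝ
      (mem_of_superset (isOpen_ball.mem_nhds hx) ball_subset_closedBall) hK
  have hh : MemLp (fderiv ℝ h) 2 μR :=
    (memLp_two_iff_integrable_sq_norm (measurable_fderiv ℝ h).aestronglyMeasurable).2 hIntg
  set L := avgDeriv n ψ R with hLdef
  have isq : ∀ {f : EuclideanSpace ℝ (Fin n) → EuclideanSpace ℝ (Fin n) →L[ℝ] ℝ}
      {μ : Measure (EuclideanSpace ℝ (Fin n))}, MemLp f 2 μ → Integrable (fun x => ‖f x‖^2) μ :=
    fun hf => hf.norm.integrable_sq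
  have mono : ∀ f : EuclideanSpace ℝ (Fin n) → EuclideanSpace ℝ (Fin n) →L[ℝ] ℝ,
      MemLp f 2 μR → ∫ x, ‖f x‖^2 ∂μr ≤ ∫ x, ‖f x‖^2 ∂μR := fun f hf =>
    integral_mono_measure hle (ae_of_all _ fun x => by positivity) (isq hf)
  have hψL : MemLp (fun x => fderiv ℝ ψ x - L) 2 μR := hψ.sub (memLp_const L)
  have hhL : MemLp (fun x => fderiv ℝ h x - L) 2 μR := hh.sub (memLp_const L)
  have hψh : MemLp (fun x => fderiv ℝ ψ x - fderiv ℝ h x) 2 μR := hψ.sub hh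
  set P := ∫ x, ‖fderiv ℝ ψ x - L‖^2 ∂μR with hP
  set Q := ∫ x, ‖fderiv ℝ ψ x - fderiv ℝ h x‖^2 ∂μR with hQ
  set S := ∫ x, ‖fderiv ℝ h x - L‖^2 ∂μR with hS
  have hP0 : 0 ≤ P := integral_nonneg fun x => by positivity
  have hQ0 : 0 ≤ Q := integral_nonneg fun x => by positivity
  have hSle : S ≤ 2 * P + 2 * Q := by
    rw [hP, hQ, ← integral_const_mul, ← integral_const_mul,
      ← integral_add ((isq hψL).const_mul 2) ((isq hψh).const_mul 2)]
    apply integral_mono (isq hhL) (((isq hψL).const_mul 2).add ((isq hψh).const_mul 2))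
    intro x
    have : ‖fderiv ℝ h x - L‖ ≤ ‖fderiv ℝ ψ x - L‖ + ‖fderiv ℝ ψ x - fderiv ℝ h x‖ := by
      have := norm_sub_le_norm_sub_add_norm_sub (fderiv ℝ h x) (fderiv ℝ ψ x) L
      rw [norm_sub_rev (fderiv ℝ h x) (fderiv ℝ ψ x)] at this
      linarith
    simp only [Pi.add_apply]
    nlinarith [norm_nonneg (fderiv ℝ h x - L),
      sq_nonneg (‖fderiv ℝ ψ x - L‖ - ‖fderiv ℝ ψ x - fderiv ℝ h x‖)]
  have hVr : μr.real univ = r^n * v := by rw [hμr, measureReal_restrict_apply_univ, hvol r hr]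
  have hVR : μR.real univ = R^n * v := by rw [hμR, measureReal_restrict_apply_univ, hvol R hR]
  have havg : ∀ A, ∫ x, ‖fderiv ℝ ψ x - avgDeriv n ψ r‖^2 ∂μr ≤
      4 * ∫ x, ‖fderiv ℝ ψ x - A‖^2 ∂μr := by
    intro A
    have := avg_le μr (fderiv ℝ ψ) (by rw [hVr]; positivity) (hψ.mono_measure hle) A
    rw [hμr, measureReal_restrict_apply_univ] at this
    exact this
  set T := (r / R) ^ ((n : ℝ) + 2 * β) with hT
  have hrR0 : 0 < r / R := by positivity
  have hrR1 : r / R ≤ 1 := (div_le_one hR).2 hrR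
  have hT0 : 0 < T := Real.rpow_pos_of_pos hrR0 _
  have hT1 : T ≤ 1 := Real.rpow_le_one hrR0.le hrR1 (by positivity)
  have hTpow : (r / R) ^ (n + 2) ≤ T := by
    rw [← Real.rpow_natCast]
    apply Real.rpow_le_rpow_of_exponent_ge hrR0 hrR1
    push_cast; linarith
  have hTP : 0 ≤ T * P := by positivity
  rcases lt_or_ge (R / 2) r with hcase | hcase
  · have h1 := (havg L).trans (mul_le_mul_of_nonneg_left (mono _ hψL) (by norm_num))
    have h2 : 1 ≤ 2 ^ (n + 2) * T := by
      refine le_trans ?_ (mul_le_mul_of_nonneg_left hTpow (by positivity))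
      rw [← mul_pow]
      apply one_le_pow₀
      rw [← mul_div_assoc, le_div_iff₀ hR]; linarith
    have h3 := mul_le_mul_of_nonneg_right h2 hP0
    have h4 : 0 ≤ K0 * (T * P) := by positivity
    have h5 : 0 ≤ (8 + 16 * K0 + 4 * 2 ^ (n+2)) * Q := by positivity
    linarith
  · have hpt : ∀ x ∈ ball (0 : EuclideanSpace ℝ (Fin n)) r,
        ‖fderiv ℝ h x - fderiv ℝ h 0‖^2 ≤ c0^2 * (r^2 / R^(n+2)) * v * S := by
      intro x hx
      have h1 := grad_est h R hR hC2 hlap L (hhL.norm.integrable (by norm_num)) x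
        (ball_subset_ball hcase hx)
      have h2 := jensen2 μR _ hhL.norm
      rw [hVR] at h2
      rw [mem_ball_zero_iff] at hx
      have hS0 : 0 ≤ S := integral_nonneg fun x => by positivity
      have hI0 : 0 ≤ ∫ x, ‖fderiv ℝ h x - L‖ ∂μR := integral_nonneg fun x => by positivity
      calc _ ≤ (c0 * (‖x‖ / R ^ (n+1)) * ∫ z in ball 0 R, ‖fderiv ℝ h z - L‖)^2 :=
            pow_le_pow_left₀ (norm_nonneg _) h1 2
        _ = (c0 * (‖x‖ / R ^ (n+1)))^2 * (∫ z, ‖fderiv ℝ h z - L‖ ∂μR)^2 := by rw [mul_pow]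
        _ ≤ (c0 * (r / R ^ (n+1)))^2 * (R^n * v * S) := by
            gcongr
        _ = _ := by
            field_simp
            ring
    have hG : ∫ x, ‖fderiv ℝ h x - fderiv ℝ h 0‖^2 ∂μr ≤ K0 * (r / R)^(n+2) * S := by
      calc _ ≤ ∫ x, c0^2 * (r^2 / R^(n+2)) * v * S ∂μr := by
            apply integral_mono_ae (isq ((hh.mono_measure hle).sub (memLp_const _)))
              (integrable_const _)
            filter_upwards [ae_restrict_mem measurableSet_ball] with x hx using hpt x hx
        _ = _ := by
            rw [integral_const, hVr, smul_eq_mul, hK0, div_pow r R]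
            field_simp
            try ring
    have hA := havg (fderiv ℝ h 0)
    have hB : ∫ x, ‖fderiv ℝ ψ x - fderiv ℝ h 0‖^2 ∂μr ≤
        2 * Q + 2 * ∫ x, ‖fderiv ℝ h x - fderiv ℝ h 0‖^2 ∂μr := by
      have h1 := mono _ hψh
      have i1 := isq (hψh.mono_measure hle)
      have i2 : Integrable (fun x => ‖fderiv ℝ h x - fderiv ℝ h 0‖^2) μr := isq ((hh.mono_measure hle).sub (memLp_const (fderiv ℝ h 0)))
      have i3 : Integrable (fun x => ‖fderiv ℝ ψ x - fderiv ℝ h 0‖^2) μr := isq ((hψ.mono_measure hle).sub (memLp_const (fderiv ℝ h 0)))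
      have h2 : ∫ x, ‖fderiv ℝ ψ x - fderiv ℝ h 0‖^2 ∂μr ≤
          ∫ x, (2 * ‖fderiv ℝ ψ x - fderiv ℝ h x‖^2 + 2 * ‖fderiv ℝ h x - fderiv ℝ h 0‖^2) ∂μr := by
        apply integral_mono i3 ((i1.const_mul 2).add (i2.const_mul 2))
        intro x
        have := norm_sub_le_norm_sub_add_norm_sub (fderiv ℝ ψ x) (fderiv ℝ h x) (fderiv ℝ h 0)
        simp only [Pi.add_apply]
        nlinarith [norm_nonneg (fderiv ℝ ψ x - fderiv ℝ h 0),
          sq_nonneg (‖fderiv ℝ ψ x - fderiv ℝ h x‖ - ‖fderiv ℝ h x - fderiv ℝ h 0‖)]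
      rw [integral_add (i1.const_mul 2) (i2.const_mul 2), integral_const_mul,
        integral_const_mul] at h2
      linarith
    have hG2 : K0 * (r / R)^(n+2) * S ≤ 2 * (K0 * (T * P)) + 2 * (K0 * Q) := by
      calc _ ≤ K0 * T * (2 * P + 2 * Q) := by gcongr
        _ = 2 * (K0 * (T * P)) + 2 * (K0 * (T * Q)) := by ring
        _ ≤ 2 * (K0 * (T * P)) + 2 * (K0 * (1 * Q)) := by gcongr
        _ = _ := by ring
    have p1 : 0 ≤ 2 ^ (n+2) * (T * P) := by positivity
    have p2 : 0 ≤ 2 ^ (n+2) * Q := by positivity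
    linarith
end
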